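/- Let R be a commutative Noetherian ring. Define a relation < on finite lists of elements of R by: α < β if and only if either β is a strict extension of α (β extends α by at least one element), or there exists a list γ with α ≺ γ such that β is an extension of γ. Then < is well-founded on independent lists: there is no infinite sequence α_0 < α_1 < α_2 < ⋯ of independent lists (equivalently, every independent list is accessible for the relation < restricted to independent lists). -/

import Mathlib

/-- The annihilator ideal of an element `v`: `{x | v * x = 0}`. -/
def ann {R : Type*} [CommRing R] (v : R) : Ideal R where
  carrier := {x | v * x = 0}
  add_mem' := by
    intro a b ha hb
    simp only [Set.mem_setOf_eq] at *
    rw [mul_add, ha, hb, add_zero]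
  zero_mem' := by simp
  smul_mem' := by
    intro c x hx
    simp only [Set.mem_setOf_eq, smul_eq_mul] at *
    rw [mul_comm c x, ← mul_assoc, hx, zero_mul]

/-- The relation `α ≺ β` on finite lists: `β = (w_1, ..., w_m)` with `m ≤ length α`,
`w_i = v_i` for `i < m`, and `ann v_m ⊊ ann w_m`, i.e. `α = γ ++ v :: δ`,
`β = γ ++ [w]` with `ann v ⊊ ann w`. -/
def Prec {R : Type*} [CommRing R] (α β : List R) : Prop :=
  ∃ (γ δ : List R) (v w : R), α = γ ++ v :: δ ∧ β = γ ++ [w] ∧ ann v < ann w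

/-- A list is independent if for each position `k`, the intersection of the annihilators
of the other entries is not contained in the annihilator of the `k`-th entry. -/
def IndepList {R : Type*} [CommRing R] (l : List R) : Prop :=
  ∀ k : Fin l.length,
    ¬ (⨅ i : {i : Fin l.length // i ≠ k}, ann (l.get i.1)) ≤ ann (l.get k)

/-- The lexicographic relation: `α < β` iff `β` is a strict extension of `α`, or `β` is
an extension of some `γ` with `α ≺ γ`. -/
def LexLt {R : Type*} [CommRing R] (α β : List R) : Prop :=
  (α <+: β ∧ α ≠ β) ∨ ∃ γ : List R, Prec α γ ∧ γ <+: β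

/-!
For a relation `r` without infinite ascending chains, the lexicographic order on the nodes of a
tree of finite lists has no infinite ascending chain as soon as the tree has no infinite branch:
in an ascending chain the first entries stabilise, and one continues in the residual tree at the
stable first entry. The entries are compared by their annihilators, which satisfy the ascending
chain condition, so it remains to see that there is no infinite branch. Along a branch of
independent lists the common annihilators strictly decrease, and since `I ↦ Ann I` is an
order-reversing involution on annihilator ideals, these satisfy the descending chain condition too.
-/

open Descriptive

section Lexicographic

variable {A : Type*} {r : A → A → Prop}

/-- The reverse of the lexicographic order induced by `r`, restricted to the nodes of a tree of
lists. It is reversed so that its well-foundedness excludes infinite ascending chains. -/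
def LexGT (r : A → A → Prop) (T : tree A) (m l : T) : Prop :=
  List.Lex r l m

theorem acc_lexGT_cons {T : tree A} (hr : WellFounded (flip r))
    (hsub : ∀ a, [a] ∈ T → WellFounded (LexGT r (Tree.subAt T [a]))) (a : A) :
    ∀ (l : List A) (hl : a :: l ∈ T), Acc (LexGT r T) ⟨a :: l, hl⟩ := by
  induction a using hr.induction with
  | _ a ih_head =>
    intro l hl
    suffices ∀ t : Tree.subAt T [a], Acc (LexGT r T) ⟨a :: t, t.2⟩ from this ⟨l, hl⟩
    intro t
    induction t using (hsub a (Tree.singleton_mem T hl)).induction with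
    | _ t ih_tail =>
      refine ⟨_, ?_⟩
      rintro ⟨_, hm⟩ (_ | hab | htail)
      · exact ih_head _ hab _ hm
      · exact ih_tail ⟨_, hm⟩ htail

theorem wellFounded_lexGT_of_subAt {T : tree A} (hr : WellFounded (flip r))
    (hsub : ∀ a, [a] ∈ T → WellFounded (LexGT r (Tree.subAt T [a]))) :
    WellFounded (LexGT r T) := by
  refine ⟨fun ⟨l, hl⟩ ↦ ?_⟩
  cases l with
  | cons a l => exact acc_lexGT_cons hr hsub a l hl
  | nil =>
    refine ⟨_, ?_⟩
    rintro ⟨_, hm⟩ (_ | _ | _)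
    exact acc_lexGT_cons hr hsub _ _ hm

theorem wellFounded_lexGT {T : tree A} (hr : WellFounded (flip r))
    (hT : WellFounded fun m l : T ↦ ∃ a, m.1 = l.1 ++ [a]) : WellFounded (LexGT r T) := by
  have wf_subAt (l : T) : WellFounded (LexGT r (Tree.subAt T l)) := by
    induction l using hT.induction with
    | _ l ih =>
      refine wellFounded_lexGT_of_subAt hr fun a ha ↦ ?_
      rw [Tree.subAt_append]
      exact ih ⟨l ++ [a], ha⟩ ⟨a, rfl⟩
  exact ⟨fun l ↦ (wf_subAt ⟨[], Tree.mem_of_prefix l.1.nil_prefix l.2⟩).apply l⟩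

end Lexicographic

section Annihilator

variable {R : Type*}

theorem le_annihilator_comm [CommSemiring R] {I J : Ideal R} :
    I ≤ J.annihilator ↔ J ≤ I.annihilator := by
  rw [Submodule.le_annihilator_iff, Submodule.le_annihilator_iff, smul_eq_mul, smul_eq_mul,
    mul_comm]

theorem annihilator_annihilator_annihilator [CommSemiring R] (I : Ideal R) :
    I.annihilator.annihilator.annihilator = I.annihilator :=
  le_antisymm (Submodule.annihilator_mono (le_annihilator_comm.1 le_rfl))
    (le_annihilator_comm.1 le_rfl)

/-- The ideals of `R` that are annihilators of ideals, ordered by inclusion. The chain condition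
imposed on `R` is the ascending chain condition on them. -/
abbrev annihilatorIdeals (R : Type*) [CommSemiring R] : Set (Ideal R) :=
  Set.range (Submodule.annihilator : Ideal R → Ideal R)

theorem wellFoundedLT_annihilatorIdeals [CommSemiring R] [WellFoundedGT (annihilatorIdeals R)] :
    WellFoundedLT (annihilatorIdeals R) := by
  let dual (I : annihilatorIdeals R) : annihilatorIdeals R := ⟨I.1.annihilator, I.1, rfl⟩
  have dual_dual : Function.Involutive dual := by
    rintro ⟨_, I, rfl⟩
    exact Subtype.ext (annihilator_annihilator_annihilator I)
  have dual_anti : Antitone dual := fun _ _ h ↦ Submodule.annihilator_mono h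
  exact (dual_anti.strictAnti_of_injective dual_dual.injective).wellFoundedLT

variable [CommRing R]

theorem mem_ann {v x : R} : x ∈ ann v ↔ v * x = 0 :=
  Iff.rfl

theorem ann_eq_annihilator_span_singleton (v : R) : ann v = (Ideal.span {v}).annihilator := by
  ext x
  rw [Submodule.mem_annihilator_span_singleton, mem_ann, smul_eq_mul, mul_comm]

theorem wellFounded_flip_ann_lt [WellFoundedGT (annihilatorIdeals R)] :
    WellFounded (flip fun v w : R ↦ ann v < ann w) :=
  InvImage.wf (fun v : R ↦ (⟨ann v, _, (ann_eq_annihilator_span_singleton v).symm⟩ :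
    annihilatorIdeals R)) wellFounded_gt

/-- The common annihilator `⋂ Ann(v_i)` of the entries of a list. It is defined through the ideal
they generate, which exhibits it as the annihilator of an ideal. -/
def commonAnn (l : List R) : Ideal R :=
  (Ideal.span {v | v ∈ l}).annihilator

theorem mem_commonAnn {l : List R} {x : R} : x ∈ commonAnn l ↔ ∀ v ∈ l, v * x = 0 := by
  simp only [commonAnn, Submodule.mem_annihilator_span, Subtype.forall, Set.mem_ofPred_eq,
    smul_eq_mul, mul_comm x]

theorem commonAnn_concat (l : List R) (v : R) : commonAnn (l ++ [v]) = commonAnn l ⊓ ann v := by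
  ext x
  simp only [Ideal.mem_inf, mem_commonAnn, mem_ann, List.forall_mem_append,
    List.forall_mem_singleton]

end Annihilator

section Independent

variable {R : Type*} [CommRing R]

/-- The tree of sequentially independent lists: the common annihilator of the entries preceding
any given entry is not contained in the annihilator of that entry. This weakening of `IndepList`
only constrains an entry by its predecessors, which makes it visibly stable under prefixes. -/
def seqIndepTree (R : Type*) [CommRing R] : tree R :=
  ⟨{l | ∀ γ v, γ ++ [v] <+: l → ¬ commonAnn γ ≤ ann v},
    fun _ a hl γ v hγ ↦ hl γ v (hγ.trans (List.prefix_append _ [a]))⟩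

theorem commonAnn_concat_lt {l : List R} {v : R} (h : l ++ [v] ∈ seqIndepTree R) :
    commonAnn (l ++ [v]) < commonAnn l := by
  rw [commonAnn_concat, inf_lt_left]
  exact h l v List.prefix_rfl

theorem wellFounded_concat_seqIndepTree [WellFoundedGT (annihilatorIdeals R)] :
    WellFounded fun m l : seqIndepTree R ↦ ∃ a, m.1 = l.1 ++ [a] := by
  have := wellFoundedLT_annihilatorIdeals (R := R)
  refine Subrelation.wf ?_ (InvImage.wf (fun l : seqIndepTree R ↦
    (⟨commonAnn l.1, _, rfl⟩ : annihilatorIdeals R)) wellFounded_lt)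
  rintro ⟨_, hm⟩ l ⟨a, rfl⟩
  exact commonAnn_concat_lt hm

theorem IndepList.mem_seqIndepTree {l : List R} (hl : IndepList l) : l ∈ seqIndepTree R := by
  rintro γ v ⟨δ, rfl⟩ hle
  have hk : γ.length < (γ ++ [v] ++ δ).length := by simp
  have get_length : (γ ++ [v] ++ δ).get ⟨γ.length, hk⟩ = v := by simp
  refine hl ⟨γ.length, hk⟩ ?_
  rw [get_length]
  refine le_trans (fun x hx ↦ mem_commonAnn.2 fun u hu ↦ ?_) hle
  obtain ⟨i, hi, rfl⟩ := List.getElem_of_mem hu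
  have get_lt : (γ ++ [v] ++ δ).get ⟨i, hi.trans hk⟩ = γ[i] := by
    simp [List.getElem_append_left, hi]
  rw [← get_lt]
  exact Ideal.mem_iInf.1 hx ⟨⟨i, hi.trans hk⟩, Fin.ne_of_lt hi⟩

theorem LexLt.lex {α β : List R} (h : LexLt α β) :
    List.Lex (fun v w ↦ ann v < ann w) α β := by
  rcases h with ⟨⟨δ, rfl⟩, hne⟩ | ⟨_, ⟨γ, δ, v, w, rfl, rfl, hvw⟩, ε, rfl⟩
  · cases δ with
    | nil => simp at hne
    | cons a δ => simpa using List.Lex.append_left _ (.nil (a := a) (l := δ)) α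
  · rw [List.append_assoc]
    exact List.Lex.append_left (fun v w ↦ ann v < ann w) (.rel hvw) γ

end Independent

theorem lexLt_wellFounded_on_independent_general {R : Type*} [CommRing R]
    [WellFoundedGT (annihilatorIdeals R)] :
    WellFounded (fun β α : seqIndepTree R => LexLt α.1 β.1) :=
  Subrelation.wf LexLt.lex
    (wellFounded_lexGT wellFounded_flip_ann_lt wellFounded_concat_seqIndepTree)

/-- In a commutative Noetherian ring, the lexicographic relation `<` is well-founded on
independent lists of nonzero elements. -/
theorem lexLt_wellFounded_on_independent {R : Type*} [CommRing R] [IsNoetherianRing R] :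
    WellFounded (fun β α : {l : List R // (∀ x ∈ l, x ≠ 0) ∧ IndepList l} =>
      LexLt α.1 β.1) := by
  exact InvImage.wf (fun l : {l : List R // (∀ x ∈ l, x ≠ 0) ∧ IndepList l} ↦
    (⟨l.1, l.2.2.mem_seqIndepTree⟩ : seqIndepTree R)) lexLt_wellFounded_on_independent_general
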